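/- The map g : [0,1]² → [0,1]² given by g(x,y) = (x, y²) has topological entropy zero, but the induced map F on the functional envelope of ([0,1]², g) (the closure of continuous self-maps of the square in the Hausdorff metric on graphs) has infinite topological entropy. -/

import Mathlib

open Set Filter Metric Topology TopologicalSpace

/-- An arc: a subset homeomorphic to `[0,1]`. -/
def IsArc {T : Type*} [TopologicalSpace T] (A : Set T) : Prop :=
  Nonempty (↥(Set.Icc (0:ℝ) 1) ≃ₜ ↥A)

/-- An arc with endpoints `x` and `y`. -/
def IsArcBetween {T : Type*} [TopologicalSpace T] (A : Set T) (x y : T) : Prop :=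
  ∃ e : ↥(Set.Icc (0:ℝ) 1) ≃ₜ ↥A,
    ((e ⟨0, by norm_num⟩ : ↥A) : T) = x ∧ ((e ⟨1, by norm_num⟩ : ↥A) : T) = y

/-- A tree: a continuum which is uniquely arcwise connected and is a point or a
union of finitely many arcs. -/
structure IsTreeSpace (T : Type*) [MetricSpace T] : Prop where
  compact : CompactSpace T
  conn : ConnectedSpace T
  uniqueArc : ∀ x y : T, x ≠ y → ∃! A : Set T, IsArcBetween A x y
  finiteArcs : (∃ x : T, (Set.univ : Set T) = {x}) ∨
    ∃ s : Finset (Set T), (∀ A ∈ s, IsArc A) ∧ ⋃₀ (s : Set (Set T)) = Set.univ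

/-- The unique arc from `x` to `y` in a tree. -/
noncomputable def treeArc {T : Type*} [MetricSpace T] (hT : IsTreeSpace T) (x y : T) :
    Set T := by
  classical exact if h : x = y then {x} else (hT.uniqueArc x y h).choose

/-- `Comp B x` : the connected component of `x` in `B` if `x ∈ B`, else `{x}`. -/
noncomputable def Comp {T : Type*} [TopologicalSpace T] (B : Set T) (x : T) : Set T := by
  classical exact if x ∈ B then connectedComponentIn B x else {x}

/-- `x` is an endpoint of the whole space (valence one). -/
def IsEnd {T : Type*} [TopologicalSpace T] (x : T) : Prop :=
  IsConnected ({x}ᶜ : Set T)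

/-- `x` is a cut-point of the whole space (valence at least two). -/
def IsCut {T : Type*} [TopologicalSpace T] (x : T) : Prop :=
  ¬ IsPreconnected ({x}ᶜ : Set T)

/-- `x` is an endpoint of the subspace `S` (valence one in `S`). -/
def IsEndpointOf {T : Type*} [TopologicalSpace T] (S : Set T) (x : T) : Prop :=
  x ∈ S ∧ IsConnected (S \ {x})

/-- A subcontinuum: a nonempty compact connected subset. -/
def IsSubcontinuum {T : Type*} [TopologicalSpace T] (A : Set T) : Prop :=
  A.Nonempty ∧ IsCompact A ∧ IsConnected A

/-- Attracting fixed point. -/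
def IsAFP {T : Type*} [TopologicalSpace T] (f : T → T) (x : T) : Prop :=
  f x = x ∧ ∀ U : Set T, IsOpen U → x ∈ U →
    ∃ V : Set T, IsOpen V ∧ x ∈ V ∧ V ⊆ U ∧ f '' closure V ⊆ V

/-- `A` is asymptotically periodic under `f`: for some `p ≥ 1` the sequence
`f^{pn}(A)` converges in the Hausdorff metric (to a nonempty compact set). -/
def AsympPeriodic {T : Type*} [MetricSpace T] (f : T → T) (A : Set T) : Prop :=
  ∃ p : ℕ, 1 ≤ p ∧ ∃ L : Set T, L.Nonempty ∧ IsCompact L ∧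
    Tendsto (fun n : ℕ => hausdorffDist (f^[p * n] '' A) L) atTop (𝓝 0)

/-- Kuratowski lower limit of a sequence of sets. -/
def KLiminf {T : Type*} [TopologicalSpace T] (A : ℕ → Set T) : Set T :=
  {x | ∀ U : Set T, IsOpen U → x ∈ U → ∀ᶠ n in atTop, (U ∩ A n).Nonempty}

/-- Kuratowski upper limit of a sequence of sets. -/
def KLimsup {T : Type*} [TopologicalSpace T] (A : ℕ → Set T) : Set T :=
  {x | ∀ U : Set T, IsOpen U → x ∈ U → ∃ᶠ n in atTop, (U ∩ A n).Nonempty}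

/-- Convergence in the hyperspace: the Kuratowski lower and upper limits agree. -/
def KConv {T : Type*} [TopologicalSpace T] (A : ℕ → Set T) : Prop :=
  KLiminf A = KLimsup A

/-- Set-theoretic limit superior of the iterated images of `A`. -/
def Ls {T : Type*} (f : T → T) (A : Set T) : Set T :=
  ⋂ m : ℕ, ⋃ n : ℕ, ⋃ (_ : m ≤ n), f^[n] '' A

/-- The hyperspace of subcontinua of `T`, with the Hausdorff metric. -/
abbrev SubCon (T : Type*) [MetricSpace T] :=
  {A : NonemptyCompacts T // IsConnected (A.1 : Set T)}

/-- The induced map on the hyperspace of subcontinua. -/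
noncomputable def indCon {T : Type*} [MetricSpace T] (f : T → T) (hf : Continuous f) :
    SubCon T → SubCon T :=
  fun A => ⟨⟨⟨f '' (A.1 : Set T), A.1.isCompact.image hf⟩, A.1.nonempty.image f⟩,
    A.2.image f hf.continuousOn⟩

/-- Topological entropy (Bowen–Dinaburg) of `f` on the subset `S`. -/
noncomputable def entropyOn {X : Type*} [MetricSpace X] (f : X → X) (S : Set X) : EReal :=
  Dynamics.coverEntropy f S

/-- Topological entropy of `f`. -/
noncomputable def entropy {X : Type*} [MetricSpace X] (f : X → X) : EReal :=
  Dynamics.coverEntropy f Set.univ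

/-- Maximal cardinality of an `(n,f,ε)`-separated subset of `S`. -/
noncomputable def sepNumOn {X : Type*} [MetricSpace X] (f : X → X) (S : Set X)
    (n : ℕ) (ε : ℝ) : ℕ :=
  sSup {k : ℕ | ∃ E : Finset X, ↑E ⊆ S ∧
    (∀ x ∈ E, ∀ y ∈ E, x ≠ y → ∃ j < n, ε < dist (f^[j] x) (f^[j] y)) ∧ E.card = k}

/-- Minimal cardinality of an `(n,f,ε)`-spanning subset of `S`. -/
noncomputable def spanNumOn {X : Type*} [MetricSpace X] (f : X → X) (S : Set X)
    (n : ℕ) (ε : ℝ) : ℕ :=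
  sInf {k : ℕ | ∃ F : Finset X, ↑F ⊆ S ∧
    (∀ x ∈ S, ∃ y ∈ F, ∀ j < n, dist (f^[j] x) (f^[j] y) ≤ ε) ∧ F.card = k}

noncomputable def sepNum {X : Type*} [MetricSpace X] (f : X → X) (n : ℕ) (ε : ℝ) : ℕ :=
  sepNumOn f Set.univ n ε

noncomputable def spanNum {X : Type*} [MetricSpace X] (f : X → X) (n : ℕ) (ε : ℝ) : ℕ :=
  spanNumOn f Set.univ n ε

/-- The graph of a map. -/
def graphOf {X : Type*} (φ : X → X) : Set (X × X) := {p | p.2 = φ p.1}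

/-- The functional envelope: the closure, in the hyperspace of nonempty compact
subsets of `X × X` with the Hausdorff metric, of the set of graphs of continuous
self-maps of `X`. -/
def FunctionalEnvelope (X : Type*) [MetricSpace X] :
    Set (NonemptyCompacts (X × X)) :=
  closure {G : NonemptyCompacts (X × X) | ∃ φ : X → X, Continuous φ ∧
    (G : Set (X × X)) = graphOf φ}

/-- `F` is the map induced by `f` on the functional envelope:
`F(φ) = f ∘ φ`, i.e. on graphs, `F(G) = (id × f)(G)`. -/
def IsEnvelopeMap {X : Type*} [MetricSpace X] (f : X → X)
    (F : ↥(FunctionalEnvelope X) → ↥(FunctionalEnvelope X)) : Prop :=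
  ∀ G : ↥(FunctionalEnvelope X),
    ((F G : NonemptyCompacts (X × X)) : Set (X × X)) =
      Prod.map id f '' ((G : NonemptyCompacts (X × X)) : Set (X × X))

/-- The setoid on `T` identifying all points of `M` (so that `Quotient` is `T/M`). -/
def collapseSetoid {T : Type*} (M : Set T) : Setoid T where
  r a b := a = b ∨ (a ∈ M ∧ b ∈ M)
  iseqv := by
    refine ⟨fun a => Or.inl rfl, ?_, ?_⟩
    · rintro a b (rfl | ⟨h1, h2⟩)
      exacts [Or.inl rfl, Or.inr ⟨h2, h1⟩]
    · rintro a b c (rfl | ⟨h1, h2⟩) h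
      · exact h
      · rcases h with rfl | ⟨h3, h4⟩
        exacts [Or.inr ⟨h1, h2⟩, Or.inr ⟨h1, h4⟩]
/-- The squaring map on `[0,1]`. -/
noncomputable def sqI : ↥(Set.Icc (0:ℝ) 1) → ↥(Set.Icc (0:ℝ) 1) :=
  fun y => ⟨(y : ℝ) ^ 2, ⟨by positivity, by nlinarith [y.2.1, y.2.2]⟩⟩

/-- The map `g(x,y) = (x, y²)` on the square `[0,1]²`. -/
noncomputable def gSquare :
    (↥(Set.Icc (0:ℝ) 1) × ↥(Set.Icc (0:ℝ) 1)) →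
      (↥(Set.Icc (0:ℝ) 1) × ↥(Set.Icc (0:ℝ) 1)) :=
  fun p => (p.1, sqI p.2)

/-! Sublevel sets of a Lyapunov function are forward invariant, so an orbit visits the complementary
set `{t ≤ u}` exactly during an initial segment of times. If the Lyapunov functions separate points
of a compact space, finitely many sets `{t ≤ u}` resolve it up to a given entourage; hence an orbit
of length `n` is determined by finitely many numbers in `{0, …, n}` and the entropy vanishes.

For the envelope of `id × h`, let `z` be a wandering point of `h`. The preimages `h⁻ʲ(K)` of a small
closed ball `K` around `z` are pairwise disjoint, so for every word `c` Tietze's theorem gives a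
continuous `w` taking the value `c j` on `h⁻ʲ(K)`. Under the envelope map the graph of
`(x, y) ↦ (w y, y)` becomes after `j` steps the graph of `(x, y) ↦ (w y, hʲ y)`; over `K` its first
coordinate reads off the letter `c j`. Thus words over any finite alphabet give separated orbits. -/

open Dynamics ExpGrowth Function
open scoped Uniformity

universe u v

lemma expGrowthSup_succ_pow_le_zero (M : ℕ) :
    expGrowthSup (fun n : ℕ => (((n + 1) ^ M : ℕ) : ENNReal)) ≤ 0 := by
  refine expGrowthSup_le_iff.2 fun b hb => ?_
  obtain ⟨r, hr, hrb⟩ := EReal.lt_iff_exists_real_btwn.1 hb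
  have hexp : (1 : ℝ) < Real.exp r := Real.one_lt_exp_iff.2 (by exact_mod_cast hr)
  have hlittle := (isLittleO_pow_const_const_pow_of_one_lt (R := ℝ) M hexp).bound
    (inv_pos.2 (Real.exp_pos r))
  filter_upwards [(tendsto_add_atTop_nat 1).eventually hlittle] with n hn
  have hreal : (((n + 1) ^ M : ℕ) : ℝ) ≤ Real.exp (r * n) := by
    rw [mul_comm r, Real.exp_nat_mul]
    simpa [pow_succ', abs_of_nonneg, add_nonneg] using hn
  calc (((n + 1) ^ M : ℕ) : ENNReal)
      = ENNReal.ofReal (((n + 1) ^ M : ℕ) : ℝ) := (ENNReal.ofReal_natCast _).symm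
    _ ≤ ENNReal.ofReal (Real.exp (r * n)) := ENNReal.ofReal_le_ofReal hreal
    _ = EReal.exp ((r : EReal) * n) := by rw [← EReal.exp_coe]; push_cast; rfl
    _ ≤ EReal.exp (b * n) := by gcongr

lemma eq_of_isLowerSet_of_card_eq {α : Type*} [LinearOrder α] {s t : Finset α}
    (hs : IsLowerSet (s : Set α)) (ht : IsLowerSet (t : Set α)) (h : s.card = t.card) : s = t := by
  rcases hs.total ht with hst | hts
  · exact Finset.eq_of_subset_of_card_le (Finset.coe_subset.1 hst) h.ge
  · exact (Finset.eq_of_subset_of_card_le (Finset.coe_subset.1 hts) h.le).symm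

section Coding

variable {X : Type*} {T : X → X} {D : Set X} {n : ℕ}

open scoped Classical in
/-- The times `j < n` at which the orbit of `x` under `T` is in `D`. If `D` has a
forward invariant complement, their number determines them and serves as a code of the orbit. -/
noncomputable def visitTimes (T : X → X) (D : Set X) (n : ℕ) (x : X) : Finset ℕ :=
  {j ∈ Finset.range n | T^[j] x ∈ D}

lemma mem_visitTimes {x : X} {j : ℕ} : j ∈ visitTimes T D n x ↔ j < n ∧ T^[j] x ∈ D := by
  simp [visitTimes]

lemma card_visitTimes_le (T : X → X) (D : Set X) (n : ℕ) (x : X) :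
    (visitTimes T D n x).card ≤ n :=
  (Finset.card_le_card fun _ hj => Finset.mem_range.2 (mem_visitTimes.1 hj).1).trans_eq
    (Finset.card_range n)

lemma isLowerSet_visitTimes (hD : T ⁻¹' D ⊆ D) (x : X) :
    IsLowerSet (visitTimes T D n x : Set ℕ) := by
  have hanti : Antitone fun j => T^[j] x ∈ D :=
    antitone_nat_of_succ_le fun j hj => hD (by rwa [iterate_succ_apply'] at hj)
  intro i j hji hi
  simp only [Finset.mem_coe, mem_visitTimes] at hi ⊢
  exact ⟨hji.trans_lt hi.1, hanti hji hi.2⟩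

lemma netMaxcard_le_card_of_code {α : Type*} [Fintype α] {U : SetRel X X} (F : Set X)
    (code : X → α) (hcode : ∀ x y, code x = code y → (x, y) ∈ dynEntourage T U n) :
    netMaxcard T F U n ≤ Fintype.card α := by
  refine iSup₂_le fun s hs => Nat.cast_le.2 ?_
  refine Finset.card_le_card_of_injOn (t := Finset.univ) code (fun _ _ => by simp) ?_
  intro x hx y hy hxy
  exact hs.2.elim_set hx hy y (hcode x y hxy) (hcode y y rfl)

lemma netMaxcard_le_succ_pow {ι : Type*} [Fintype ι] {D : ι → Set X} {U : SetRel X X}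
    (hD : ∀ i, T ⁻¹' D i ⊆ D i) (hU : ∀ x y, (∀ i, x ∈ D i ↔ y ∈ D i) → (x, y) ∈ U)
    (F : Set X) (n : ℕ) :
    netMaxcard T F U n ≤ ((n + 1) ^ Fintype.card ι : ℕ) := by
  let code (x : X) (i : ι) : Fin (n + 1) :=
    ⟨(visitTimes T (D i) n x).card, Nat.lt_succ_of_le (card_visitTimes_le T (D i) n x)⟩
  classical
  refine (netMaxcard_le_card_of_code F code fun x y hxy => ?_).trans_eq (by simp)
  refine mem_dynEntourage.2 fun j hj => hU _ _ fun i => ?_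
  have htimes : visitTimes T (D i) n x = visitTimes T (D i) n y :=
    eq_of_isLowerSet_of_card_eq (isLowerSet_visitTimes (hD i) x) (isLowerSet_visitTimes (hD i) y)
      (congrArg Fin.val (congrFun hxy i))
  simpa [mem_visitTimes, hj] using congrArg (j ∈ ·) htimes

end Coding

lemma exists_finset_superlevel_resolving {X : Type*} [UniformSpace X] [CompactSpace X]
    {S : Set (X → ℝ)} (hS : ∀ u ∈ S, Continuous u) (hsep : S.SeparatesPoints) {U : SetRel X X}
    (hU : U ∈ 𝓤 X) :
    ∃ s : Finset (S × ℝ),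
      ∀ x y, (∀ p ∈ s, p.2 ≤ p.1.1 x ↔ p.2 ≤ p.1.1 y) → (x, y) ∈ U := by
  let V (p : S × ℝ) : Set (X × X) :=
    {q | p.1.1 q.1 < p.2 ∧ p.2 < p.1.1 q.2} ∪ {q | p.1.1 q.2 < p.2 ∧ p.2 < p.1.1 q.1}
  have hV (p : S × ℝ) : IsOpen (V p) := by
    have hu := hS p.1.1 p.1.2
    have h₁ : Continuous fun q : X × X => p.1.1 q.1 := hu.comp continuous_fst
    have h₂ : Continuous fun q : X × X => p.1.1 q.2 := hu.comp continuous_snd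
    exact ((isOpen_lt h₁ continuous_const).inter (isOpen_lt continuous_const h₂)).union
      ((isOpen_lt h₂ continuous_const).inter (isOpen_lt continuous_const h₁))
  have hcover : (interior U)ᶜ ⊆ ⋃ p, V p := by
    rintro ⟨x, y⟩ hxy
    have hne : x ≠ y := by
      rintro rfl
      exact hxy (subset_interior_iff_mem_nhdsSet.2 (nhdsSet_diagonal_le_uniformity hU) rfl)
    obtain ⟨u, hu, hne⟩ := hsep hne
    rcases hne.lt_or_gt with hlt | hlt
    · obtain ⟨t, ht⟩ := exists_between hlt
      exact mem_iUnion.2 ⟨(⟨u, hu⟩, t), Or.inl ht⟩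
    · obtain ⟨t, ht⟩ := exists_between hlt
      exact mem_iUnion.2 ⟨(⟨u, hu⟩, t), Or.inr ht⟩
  obtain ⟨s, hs⟩ := isOpen_interior.isClosed_compl.isCompact.elim_finite_subcover V hV hcover
  refine ⟨s, fun x y hxy => by_contra fun hnot => ?_⟩
  obtain ⟨p, hp, hlt | hlt⟩ := mem_iUnion₂.1 (hs fun h => hnot (interior_subset h))
  · exact hlt.1.not_ge ((hxy p hp).2 hlt.2.le)
  · exact hlt.1.not_ge ((hxy p hp).1 hlt.2.le)

/-- The continuous Lyapunov functions of `T`: those which do not increase along orbits. -/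
def lyapunovFunctions {X : Type*} [TopologicalSpace X] (T : X → X) : Set (X → ℝ) :=
  {u | Continuous u ∧ ∀ x, u (T x) ≤ u x}

lemma lyapunovFunctions_id_separatesPoints (X : Type*) [MetricSpace X] :
    (lyapunovFunctions (id : X → X)).SeparatesPoints := fun x y hxy =>
  ⟨(dist · y), ⟨by fun_prop, fun _ => le_rfl⟩, by simpa using hxy⟩

lemma lyapunovFunctions_prodMap_separatesPoints {X Y : Type*} [TopologicalSpace X]
    [TopologicalSpace Y] {S : X → X} {T : Y → Y} (hS : (lyapunovFunctions S).SeparatesPoints)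
    (hT : (lyapunovFunctions T).SeparatesPoints) :
    (lyapunovFunctions (Prod.map S T)).SeparatesPoints := by
  intro p q hpq
  by_cases hfst : p.1 = q.1
  · obtain ⟨u, hu, hne⟩ := hT fun hsnd => hpq (Prod.ext hfst hsnd)
    exact ⟨u ∘ Prod.snd, ⟨hu.1.comp continuous_snd, fun r => hu.2 r.2⟩, hne⟩
  · obtain ⟨u, hu, hne⟩ := hS hfst
    exact ⟨u ∘ Prod.fst, ⟨hu.1.comp continuous_fst, fun r => hu.2 r.1⟩, hne⟩

theorem coverEntropy_eq_zero_of_lyapunovFunctions_separatesPoints {X : Type*} [UniformSpace X]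
    [CompactSpace X] {T : X → X} (hT : (lyapunovFunctions T).SeparatesPoints) {F : Set X}
    (hF : F.Nonempty) : coverEntropy T F = 0 := by
  refine le_antisymm ?_ (coverEntropy_nonneg T hF)
  rw [coverEntropy_eq_iSup_netEntropyEntourage]
  refine iSup₂_le fun U hU => ?_
  obtain ⟨s, hs⟩ := exists_finset_superlevel_resolving (fun _ hu => hu.1) hT hU
  let D (p : s) : Set X := {x | p.1.2 ≤ p.1.1.1 x}
  have hD (p : s) : T ⁻¹' D p ⊆ D p := fun x hx => le_trans hx (p.1.1.2.2 x)
  have hDU (x y : X) (hxy : ∀ p, x ∈ D p ↔ y ∈ D p) : (x, y) ∈ U :=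
    hs x y fun p hp => hxy ⟨p, hp⟩
  refine le_trans (expGrowthSup_monotone fun n => ?_) (expGrowthSup_succ_pow_le_zero s.card)
  simpa using ENat.toENNReal_mono (netMaxcard_le_succ_pow hD hDU F n)

/-- A wandering point: some neighbourhood has pairwise disjoint iterated preimages. -/
def IsWanderingPoint {X : Type*} [TopologicalSpace X] (T : X → X) (z : X) : Prop :=
  ∃ U ∈ 𝓝 z, Pairwise (Disjoint on fun j : ℕ => T^[j] ⁻¹' U)

lemma isWanderingPoint_of_lyapunovFunctions_separatesPoints {X : Type*} [TopologicalSpace X]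
    {T : X → X} (hc : Continuous T) (hT : (lyapunovFunctions T).SeparatesPoints) {z : X}
    (hz : T z ≠ z) : IsWanderingPoint T z := by
  obtain ⟨u, ⟨hu, hle⟩, hne⟩ := hT hz
  obtain ⟨t, htl, htr⟩ := exists_between (lt_of_le_of_ne (hle z) hne)
  refine ⟨{x | u (T x) < t ∧ t < u x},
    ((isOpen_lt (hu.comp hc) continuous_const).inter (isOpen_lt continuous_const hu)).mem_nhds
      ⟨htl, htr⟩, (pairwise_disjoint_on _).2 fun i j hij => disjoint_left.2 fun x hi hj => ?_⟩
  have hanti : Antitone fun k => u (T^[k] x) :=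
    antitone_nat_of_succ_le fun k => by simpa only [iterate_succ_apply'] using hle (T^[k] x)
  have hlt : u (T^[i + 1] x) < t := by simpa only [iterate_succ_apply'] using hi.1
  exact (hj.2.trans_le (hanti hij)).not_gt hlt

section Separated

variable {X : Type*} [PseudoMetricSpace X] {T : X → X} {n : ℕ} {ε : ℝ}

lemma card_le_netMaxcard_of_separated {α : Type*} [Fintype α] (hε : 0 < ε) {c : α → X}
    (hc : Pairwise fun a b => ∃ j < n, ε ≤ dist (T^[j] (c a)) (T^[j] (c b))) :
    Fintype.card α ≤ netMaxcard T univ {p | dist p.1 p.2 < ε / 2} n := by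
  classical
  have hinj : Injective c := by
    intro a b hab
    by_contra hne
    obtain ⟨j, -, hj⟩ := hc hne
    rw [hab, dist_self] at hj
    exact hj.not_gt hε
  have hnet : IsDynNetIn T univ {p | dist p.1 p.2 < ε / 2} n (Finset.univ.image c) := by
    refine ⟨subset_univ _, ?_⟩
    rw [Finset.coe_image, Finset.coe_univ]
    refine InjOn.pairwiseDisjoint_image hinj.injOn |>.2 fun a _ b _ hab => ?_
    obtain ⟨j, hjn, hj⟩ := hc hab
    refine disjoint_left.2 fun x ha hb => hj.not_gt ?_
    calc dist (T^[j] (c a)) (T^[j] (c b))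
        ≤ dist (T^[j] (c a)) (T^[j] x) + dist (T^[j] (c b)) (T^[j] x) := dist_triangle_right _ _ _
      _ < ε / 2 + ε / 2 :=
          add_lt_add (mem_ball_dynEntourage.1 ha j hjn) (mem_ball_dynEntourage.1 hb j hjn)
      _ = ε := add_halves ε
  simpa [Finset.card_image_of_injective _ hinj] using hnet.card_le_netMaxcard

lemma log_card_le_coverEntropy_of_separated {α : Type*} [Fintype α] (hε : 0 < ε)
    (h : ∀ n : ℕ, ∃ c : (Fin n → α) → X,
      Pairwise fun a b => ∃ j < n, ε ≤ dist (T^[j] (c a)) (T^[j] (c b))) :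
    ENNReal.log (Fintype.card α) ≤ coverEntropy T univ := by
  refine le_trans ?_ (netEntropyEntourage_le_coverEntropy T univ
    (dist_mem_uniformity (half_pos hε)))
  rw [← expGrowthSup_pow]
  refine expGrowthSup_monotone fun n => ?_
  obtain ⟨c, hc⟩ := h n
  simpa using ENat.toENNReal_mono (card_le_netMaxcard_of_separated hε hc)

end Separated

lemma exists_continuousMap_eqOn_const {ι : Type*} [Finite ι] {A : Type v} {B : Type u}
    [TopologicalSpace A] [TietzeExtension.{u} A] [TopologicalSpace B] [NormalSpace B]
    {K : ι → Set B} (hK : ∀ i, IsClosed (K i)) (hdisj : Pairwise (Disjoint on K)) (a : ι → A) :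
    ∃ w : C(B, A), ∀ i, EqOn w (const B (a i)) (K i) := by
  let e (p : Σ i, K i) : B := p.2
  have he : IsClosedEmbedding e := by
    refine .of_continuous_injective_isClosedMap
      (continuous_sigma fun _ => continuous_subtype_val) ?_ fun C hC => ?_
    · rintro ⟨i, x, hx⟩ ⟨j, y, hy⟩ (rfl : x = y)
      obtain rfl : i = j := hdisj.eq (not_disjoint_iff.2 ⟨x, hx, hy⟩)
      rfl
    · have himage : e '' C = ⋃ i, (↑) '' {x : K i | (⟨i, x⟩ : Σ i, K i) ∈ C} := by
        ext; simp [e]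
      rw [himage]
      exact isClosed_iUnion_of_finite fun i =>
        (hK i).isClosedMap_subtype_val _ (hC.preimage (continuous_sigmaMk (σ := fun i => K i)))
  obtain ⟨w, hw⟩ := ContinuousMap.exists_extension' he
    (⟨fun p => a p.1, continuous_sigma fun i => continuous_const (y := a i)⟩ : C(Σ i, K i, A))
  exact ⟨w, fun i x hx => congrFun hw ⟨i, x, hx⟩⟩

section Envelope

variable {X : Type*} [MetricSpace X]

/-- The graph of a continuous self-map of a compact space, as a point of the functional envelope. -/
noncomputable def envelopeGraph [CompactSpace X] [Nonempty X] (φ : C(X, X)) :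
    FunctionalEnvelope X :=
  ⟨⟨⟨graphOf φ, (isClosed_eq continuous_snd (φ.continuous.comp continuous_fst)).isCompact⟩,
    ⟨(Classical.arbitrary X, φ (Classical.arbitrary X)), rfl⟩⟩,
    subset_closure ⟨φ, φ.continuous, rfl⟩⟩

lemma IsEnvelopeMap.coe_iterate {f : X → X} {F : FunctionalEnvelope X → FunctionalEnvelope X}
    (hF : IsEnvelopeMap f F) (G : FunctionalEnvelope X) (j : ℕ) :
    ((F^[j] G : NonemptyCompacts (X × X)) : Set (X × X)) =
      Prod.map id f^[j] '' (G : NonemptyCompacts (X × X)) := by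
  induction j with
  | zero => simp
  | succ j ih =>
    rw [iterate_succ_apply', hF, ih, image_image]
    exact image_congr fun p _ => by simp only [Prod.map, id, iterate_succ_apply']

lemma IsEnvelopeMap.exists_dist_lt [CompactSpace X] [Nonempty X] {f : X → X}
    {F : FunctionalEnvelope X → FunctionalEnvelope X} (hF : IsEnvelopeMap f F) {φ ψ : C(X, X)}
    {j : ℕ} {ε : ℝ} (h : dist (F^[j] (envelopeGraph φ)) (F^[j] (envelopeGraph ψ)) < ε) (p : X) :
    ∃ q, dist (f^[j] (φ p)) (f^[j] (ψ q)) < ε := by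
  rw [Subtype.dist_eq, NonemptyCompacts.dist_eq] at h
  have hp : (p, f^[j] (φ p)) ∈ (F^[j] (envelopeGraph φ) : NonemptyCompacts (X × X)) := by
    rw [← SetLike.mem_coe, hF.coe_iterate]
    exact ⟨(p, φ p), rfl, rfl⟩
  obtain ⟨y, hy, hdist⟩ := exists_dist_lt_of_hausdorffDist_lt hp h
    (hausdorffEDist_ne_top_of_nonempty_of_bounded (NonemptyCompacts.nonempty _)
      (NonemptyCompacts.nonempty _) (NonemptyCompacts.isCompact _).isBounded
      (NonemptyCompacts.isCompact _).isBounded)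
  rw [hF.coe_iterate] at hy
  obtain ⟨⟨q, _⟩, rfl : _ = ψ q, rfl⟩ := hy
  exact ⟨q, (le_max_right _ _).trans_lt hdist⟩

end Envelope

section Product

variable {A : Type v} {B : Type u} [MetricSpace A] [CompactSpace A] [MetricSpace B]
  [CompactSpace B] {h : B → B} {F : FunctionalEnvelope (A × B) → FunctionalEnvelope (A × B)}

/-- The self-map `(x, y) ↦ (w y, y)` of `A × B`. Under the envelope map of `id × h` the first
coordinate keeps a word encoded by `w`, and the second one moves to the place where the current
letter is read. -/
def pointerMap (w : C(B, A)) : C(A × B, A × B) :=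
  (w.comp .snd).prodMk .snd

lemma min_dist_le_dist_iterate_envelopeGraph [Nonempty A] [Nonempty B]
    (hF : IsEnvelopeMap (Prod.map id h) F) {z y : B} {j : ℕ} (hy : h^[j] y = z) {r : ℝ}
    (hr : 0 ≤ r) {a b : A} {v w : C(B, A)}
    (hv : EqOn v (const B a) (h^[j] ⁻¹' closedBall z r))
    (hw : EqOn w (const B b) (h^[j] ⁻¹' closedBall z r)) :
    min r (dist a b) ≤
      dist (F^[j] (envelopeGraph (pointerMap v))) (F^[j] (envelopeGraph (pointerMap w))) := by
  by_contra! hlt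
  obtain ⟨x⟩ := ‹Nonempty A›
  obtain ⟨⟨x', y'⟩, hq⟩ := hF.exists_dist_lt hlt (x, y)
  simp only [pointerMap, Prod.map_iterate, iterate_id] at hq
  obtain ⟨hfst, hsnd⟩ := max_lt_iff.1 hq
  replace hfst : dist (v y) (w y') < min r (dist a b) := hfst
  replace hsnd : dist (h^[j] y) (h^[j] y') < min r (dist a b) := hsnd
  rw [hy, dist_comm] at hsnd
  rw [hv (by simpa [hy] using hr), hw (hsnd.le.trans (min_le_left _ _))] at hfst
  exact hfst.not_ge (min_le_right _ _)

lemma IsEnvelopeMap.log_natCast_le_entropy [Infinite A] [TietzeExtension.{u} A]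
    (hF : IsEnvelopeMap (Prod.map id h) F) (hc : Continuous h) (hs : Surjective h) {z : B}
    (hz : IsWanderingPoint h z) {k : ℕ} (hk : 2 ≤ k) : ENNReal.log k ≤ entropy F := by
  obtain ⟨U, hU, hdisj⟩ := hz
  obtain ⟨r, hr, hrU⟩ := nhds_basis_closedBall.mem_iff.1 hU
  have : Nonempty B := ⟨z⟩
  obtain ⟨s, rfl⟩ := Infinite.exists_subset_card_eq A k
  have hsep : 0 < (s : Set A).infsep :=
    s.infsep_pos_iff_nontrivial.2 (Finset.one_lt_card_iff_nontrivial.1 hk)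
  have hclosed (j : ℕ) : IsClosed (h^[j] ⁻¹' closedBall z r) :=
    isClosed_closedBall.preimage (hc.iterate j)
  have hdisj' : Pairwise (Disjoint on fun j : ℕ => h^[j] ⁻¹' closedBall z r) :=
    fun i j hij => (hdisj hij).mono (preimage_mono hrU) (preimage_mono hrU)
  have hword (n : ℕ) (c : Fin n → s) :=
    exists_continuousMap_eqOn_const (fun j : Fin n => hclosed j)
      (hdisj'.comp_of_injective Fin.val_injective) fun j => (c j : A)
  choose w hw using hword
  rw [← Fintype.card_coe s]
  refine log_card_le_coverEntropy_of_separated (lt_min hr hsep) fun n =>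
    ⟨fun c => envelopeGraph (pointerMap (w n c)), fun a b hab => ?_⟩
  obtain ⟨j, hj⟩ := ne_iff.1 hab
  obtain ⟨y, hy⟩ := hs.iterate j z
  have hdist : (s : Set A).infsep ≤ dist (a j : A) (b j) :=
    infsep_le_dist_of_mem (a j).2 (b j).2 (Subtype.coe_injective.ne hj)
  exact ⟨j, j.2, (min_le_min_left r hdist).trans
    (min_dist_le_dist_iterate_envelopeGraph hF hy hr.le (hw n a j) (hw n b j))⟩

theorem IsEnvelopeMap.entropy_eq_top_of_isWanderingPoint [Infinite A] [TietzeExtension.{u} A]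
    (hF : IsEnvelopeMap (Prod.map id h) F) (hc : Continuous h) (hs : Surjective h) {z : B}
    (hz : IsWanderingPoint h z) : entropy F = ⊤ := by
  have hlim : Tendsto (fun k : ℕ => ENNReal.log k) atTop (𝓝 ⊤) :=
    (ENNReal.continuous_log.tendsto ⊤).comp ENNReal.tendsto_nat_nhds_top
  refine top_le_iff.1 (le_of_tendsto hlim ?_)
  filter_upwards [eventually_ge_atTop 2] with k hk
  exact hF.log_natCast_le_entropy hc hs hz hk

theorem gSquare_entropy_zero_envelope_infinite_general [Infinite A] [TietzeExtension.{u} A]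
    (hc : Continuous h) (hs : Surjective h) (hsep : (lyapunovFunctions h).SeparatesPoints)
    (hne : h ≠ id) :
    entropy (Prod.map (id : A → A) h) = 0 ∧
    ∀ F : FunctionalEnvelope (A × B) → FunctionalEnvelope (A × B),
      IsEnvelopeMap (Prod.map id h) F → entropy F = ⊤ := by
  obtain ⟨z, hz⟩ := ne_iff.1 hne
  refine ⟨?_, fun F hF => hF.entropy_eq_top_of_isWanderingPoint hc hs
    (isWanderingPoint_of_lyapunovFunctions_separatesPoints hc hsep hz)⟩
  have : Nonempty B := ⟨z⟩
  exact coverEntropy_eq_zero_of_lyapunovFunctions_separatesPoints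
    (lyapunovFunctions_prodMap_separatesPoints (lyapunovFunctions_id_separatesPoints A) hsep)
    univ_nonempty

end Product

lemma continuous_sqI : Continuous sqI := by
  unfold sqI
  fun_prop

lemma surjective_sqI : Surjective sqI := fun y =>
  ⟨⟨√y, Real.sqrt_nonneg y, Real.sqrt_le_one.2 y.2.2⟩, Subtype.ext (Real.sq_sqrt y.2.1)⟩

lemma sqI_le (y : Icc (0 : ℝ) 1) : sqI y ≤ y :=
  pow_le_of_le_one y.2.1 y.2.2 two_ne_zero

lemma sqI_ne_id : sqI ≠ id := fun h => by
  have hhalf := congrArg Subtype.val (congrFun h ⟨1 / 2, by norm_num, by norm_num⟩)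
  norm_num [sqI] at hhalf

lemma lyapunovFunctions_sqI_separatesPoints : (lyapunovFunctions sqI).SeparatesPoints :=
  fun _ _ hxy => ⟨Subtype.val, ⟨continuous_subtype_val, sqI_le⟩, Subtype.coe_injective.ne hxy⟩

/-- `g(x,y) = (x,y²)` has zero entropy, but the induced map on
its functional envelope has infinite entropy. -/
theorem gSquare_entropy_zero_envelope_infinite :
    entropy gSquare = 0 ∧
    ∀ F : ↥(FunctionalEnvelope (↥(Set.Icc (0:ℝ) 1) × ↥(Set.Icc (0:ℝ) 1))) →
        ↥(FunctionalEnvelope (↥(Set.Icc (0:ℝ) 1) × ↥(Set.Icc (0:ℝ) 1))),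
      IsEnvelopeMap gSquare F → entropy F = ⊤ := by
  have : Infinite (Icc (0 : ℝ) 1) := (Icc_infinite zero_lt_one).to_subtype
  exact gSquare_entropy_zero_envelope_infinite_general continuous_sqI surjective_sqI
    lyapunovFunctions_sqI_separatesPoints sqI_ne_id
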